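/- For every integer n ≥ 7 there exist trees T₁ and T₂, each on n vertices, such that T₁ and T₂ are not isomorphic but ψ_k(T₁) = ψ_k(T₂) for every k with 1 ≤ k ≤ n. -/

import Mathlib

/-- `S` is a `k`-path vertex cover of `G`: every path in `G` on `k` vertices
(i.e. whose support has `k` vertices) contains at least one vertex of `S`. -/
def SimpleGraph.IsPathVertexCover {V : Type*} (G : SimpleGraph V) (k : ℕ) (S : Set V) : Prop :=
  ∀ ⦃u w : V⦄ (p : G.Walk u w), p.IsPath → p.support.length = k → ∃ x ∈ p.support, x ∈ S

/-- `ψ_k(G)`: the minimum cardinality of a `k`-path vertex cover of `G`. -/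
noncomputable def SimpleGraph.pathNum {V : Type*} [Fintype V] (G : SimpleGraph V) (k : ℕ) : ℕ :=
  sInf {m : ℕ | ∃ S : Finset V, G.IsPathVertexCover k ↑S ∧ S.card = m}

/-!
Take a root with at least two hubs as children, each hub carrying at least one leaf and all but at
most one carrying at least two. Every edge meets a hub, while the sets consisting of a hub and its
leaves (with the root added for the exceptional hub) contain disjoint paths on three vertices; so
`ψ₂` and `ψ₃` both equal the number of hubs. The root is an interior vertex of every path with at
least four vertices, and the longest paths have five vertices; so `ψ₄ = ψ₅ = 1` and `ψ_k = 0` for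
`k ≥ 6`. Hence the path sequence depends only on the number of vertices and the number of hubs,
and not on how the leaves are distributed: with two hubs, the leaf counts `(1, n - 4)` and
`(2, n - 5)` give the same sequence but different maximum degrees.
-/

open SimpleGraph

section PathVertexCover

variable {V W : Type*} {G : SimpleGraph V} {H : SimpleGraph W} {j k : ℕ}

lemma isPathVertexCover_mono {S : Set V} (hj : j ≠ 0) (hjk : j ≤ k)
    (hS : G.IsPathVertexCover j S) : G.IsPathVertexCover k S := by
  intro u w p hp hk
  have hlen : (p.take (j - 1)).support.length = j := by
    simp only [Walk.support_take, List.length_take]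
    omega
  obtain ⟨x, hx, hxS⟩ := hS (p.take (j - 1)) (hp.take _) hlen
  exact ⟨x, (p.isSubwalk_take _).support_subset hx, hxS⟩

lemma isPathVertexCover_preimage {S : Set W} (f : Copy G H) (hS : H.IsPathVertexCover k S) :
    G.IsPathVertexCover k (f ⁻¹' S) := by
  intro u w p hp hk
  obtain ⟨x, hx, hxS⟩ := hS (p.map f.toHom) (hp.map f.injective) (by simpa using hk)
  obtain ⟨y, hy, rfl⟩ := List.mem_map.1 (Walk.support_map _ p ▸ hx)
  exact ⟨y, hy, hxS⟩

lemma isPathVertexCover_two {S : Set V} : G.IsPathVertexCover 2 S ↔ G.IsVertexCover S := by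
  constructor
  · intro hS v w h
    simpa using hS h.toWalk (.of_adj h) rfl
  · rintro hS u w (_ | ⟨h, _ | _⟩) - hk
    · simp at hk
    · simpa using hS h
    · simp at hk

variable [Fintype V] [Fintype W]

lemma pathNum_le_card {S : Finset V} (hS : G.IsPathVertexCover k S) : G.pathNum k ≤ S.card :=
  Nat.sInf_le ⟨S, hS, rfl⟩

lemma exists_isPathVertexCover_card_eq_pathNum (G : SimpleGraph V) (k : ℕ) :
    ∃ S : Finset V, G.IsPathVertexCover k S ∧ S.card = G.pathNum k :=
  Nat.sInf_mem (s := {m | ∃ S : Finset V, G.IsPathVertexCover k S ∧ S.card = m})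
    ⟨_, Finset.univ, fun u _ p _ _ => ⟨u, p.start_mem_support, by simp⟩, rfl⟩

lemma pathNum_antitone (hj : j ≠ 0) (hjk : j ≤ k) : G.pathNum k ≤ G.pathNum j := by
  obtain ⟨S, hS, hcard⟩ := exists_isPathVertexCover_card_eq_pathNum G j
  exact hcard ▸ pathNum_le_card (isPathVertexCover_mono hj hjk hS)

lemma pathNum_le_of_isContained (h : G ⊑ H) : G.pathNum k ≤ H.pathNum k := by
  classical
  obtain ⟨f⟩ := h
  obtain ⟨S, hS, hcard⟩ := exists_isPathVertexCover_card_eq_pathNum H k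
  have hpre : G.IsPathVertexCover k (S.preimage f f.injective.injOn) := by
    simpa using isPathVertexCover_preimage f hS
  calc G.pathNum k ≤ (S.preimage f f.injective.injOn).card := pathNum_le_card hpre
    _ ≤ S.card := Finset.card_le_card_of_injOn f (fun _ => by simp) f.injective.injOn
    _ = H.pathNum k := hcard

lemma pathNum_congr (e : G ≃g H) : G.pathNum k = H.pathNum k :=
  (pathNum_le_of_isContained ⟨e.toCopy⟩).antisymm (pathNum_le_of_isContained ⟨e.symm.toCopy⟩)

/- The fibers of `c` are disjoint, so a cover needs a vertex of its own in each of them. -/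
lemma card_le_pathNum_of_fiber_paths {ι : Type*} [Fintype ι] (c : V → ι)
    (h : ∀ i, ∃ (u w : V) (p : G.Walk u w),
      p.IsPath ∧ p.support.length = k ∧ ∀ x ∈ p.support, c x = i) :
    Fintype.card ι ≤ G.pathNum k := by
  classical
  obtain ⟨S, hS, hcard⟩ := exists_isPathVertexCover_card_eq_pathNum G k
  have hsurj : Finset.univ ⊆ S.image c := fun i _ => by
    obtain ⟨u, w, p, hp, hk, hc⟩ := h i
    obtain ⟨x, hx, hxS⟩ := hS p hp hk
    exact Finset.mem_image.2 ⟨x, hxS, hc x hx⟩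
  exact hcard ▸ (Finset.card_le_card hsurj).trans Finset.card_image_le

lemma pathNum_pos {u w : V} {p : G.Walk u w} (hp : p.IsPath) :
    0 < G.pathNum p.support.length := by
  have h := card_le_pathNum_of_fiber_paths (fun _ => ()) fun _ => ⟨u, w, p, hp, rfl, by simp⟩
  rwa [Fintype.card_unit] at h

lemma pathNum_one (G : SimpleGraph V) : G.pathNum 1 = Fintype.card V :=
  (pathNum_le_card (S := .univ) fun u _ p _ _ => ⟨u, p.start_mem_support, by simp⟩).antisymm <|
    card_le_pathNum_of_fiber_paths id fun v => ⟨v, v, .nil, by simp⟩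

end PathVertexCover

section Rank

variable {V α : Type*} {G : SimpleGraph V} {f : V → α}

lemma connected_of_exists_adj_lt [LT α] [WellFoundedLT α] {r : V}
    (h : ∀ v ≠ r, ∃ w, G.Adj v w ∧ f w < f v) : G.Connected := by
  have hr : ∀ v, G.Reachable v r := by
    intro v
    induction v using (InvImage.wf f wellFounded_lt).induction with
    | _ v ih =>
      by_cases hv : v = r
      · exact hv ▸ .refl _
      · obtain ⟨w, hvw, hlt⟩ := h v hv
        exact hvw.reachable.trans (ih w hlt)
  exact { preconnected := fun v w => (hr v).trans (hr w).symm, nonempty := ⟨r⟩ }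

/- On a cycle, both neighbours of a vertex of maximal rank would have at most its rank. -/
lemma isAcyclic_of_adj_le_unique [LinearOrder α]
    (h : ∀ ⦃v w w'⦄, G.Adj v w → G.Adj v w' → f w ≤ f v → f w' ≤ f v → w = w') :
    G.IsAcyclic := by
  intro u c hc
  obtain ⟨v, hv, hmax⟩ := Set.exists_max_image {x | x ∈ c.support} f c.support.finite_toSet
    ⟨u, c.start_mem_support⟩
  have hle {w} (hw : c.toSubgraph.Adj v w) : f w ≤ f v :=
    hmax w ((Walk.mem_verts_toSubgraph c).1 hw.snd_mem)
  have hsub : (c.toSubgraph.neighborSet v).Subsingleton := fun w hw w' hw' =>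
    h hw.adj_sub hw'.adj_sub (hle hw) (hle hw')
  have hone := (Set.ncard_le_one hsub.finite).2 hsub
  have htwo := hc.ncard_neighborSet_toSubgraph_eq_two hv
  omega

end Rank

/-- The vertices of the rooted tree of height two in which the children of the root, called hubs,
are indexed by `ι`, and the leaves below the hub `i` by `L i`. -/
inductive HubVertex {ι : Type*} (L : ι → Type*)
  | root
  | hub (i : ι)
  | leaf (i : ι) (l : L i)

namespace HubVertex

variable {ι : Type*} {L : ι → Type*}

/-- The parent of a vertex; as a junk value, the root is its own parent. -/
def parent : HubVertex L → HubVertex L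
  | root => root
  | hub _ => root
  | leaf i _ => hub i

/-- The distance of a vertex from the root. -/
def depth : HubVertex L → ℕ
  | root => 0
  | hub _ => 1
  | leaf _ _ => 2

/-- The index of the hub a vertex belongs to, where the root is assigned to the hub `i₀`. -/
def hubIndex (i₀ : ι) : HubVertex L → ι
  | root => i₀
  | hub i => i
  | leaf i _ => i

lemma hub_injective : Function.Injective (hub : ι → HubVertex L) := fun _ _ => hub.inj

lemma leaf_injective (i : ι) : Function.Injective (leaf i : L i → HubVertex L) :=
  fun _ _ h => by simpa using h

/-- Vertices as a disjoint sum over the hubs, used to count them. -/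
def equivOption (L : ι → Type*) : HubVertex L ≃ Option (Σ i, Option (L i)) where
  toFun
    | root => none
    | hub i => some ⟨i, none⟩
    | leaf i l => some ⟨i, some l⟩
  invFun
    | none => root
    | some ⟨i, none⟩ => hub i
    | some ⟨i, some l⟩ => leaf i l
  left_inv := by rintro (_ | _ | _) <;> rfl
  right_inv := by rintro (_ | ⟨_, _ | _⟩) <;> rfl

instance [Fintype ι] [∀ i, Fintype (L i)] : Fintype (HubVertex L) :=
  .ofEquiv _ (equivOption L).symm

lemma card_eq [Fintype ι] [∀ i, Fintype (L i)] :
    Fintype.card (HubVertex L) = ∑ i, (Fintype.card (L i) + 1) + 1 := by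
  simp [Fintype.card_congr (equivOption L)]

end HubVertex

open HubVertex

/-- The rooted tree of height two with hubs indexed by `ι` and leaves below the hub `i` indexed by
`L i`. -/
def hubTree {ι : Type*} (L : ι → Type*) : SimpleGraph (HubVertex L) :=
  fromRel fun v w => v.parent = w

namespace hubTree

variable {ι : Type*} {L : ι → Type*}

lemma adj_iff {v w : HubVertex L} :
    (hubTree L).Adj v w ↔ v ≠ w ∧ (v.parent = w ∨ w.parent = v) :=
  fromRel_adj _ v w

lemma adj_root_hub (i : ι) : (hubTree L).Adj root (hub i) := by
  simp [adj_iff, parent]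

lemma adj_hub_leaf (i : ι) (l : L i) : (hubTree L).Adj (hub i) (leaf i l) := by
  simp [adj_iff, parent]

lemma eq_parent_of_adj {v w : HubVertex L} (h : (hubTree L).Adj v w)
    (hle : w.depth ≤ v.depth) : w = v.parent := by
  cases v <;> cases w <;> simp_all [adj_iff, parent, depth]

lemma isTree (L : ι → Type*) : (hubTree L).IsTree where
  connected := by
    refine connected_of_exists_adj_lt (f := depth) (r := root) fun v hv => ⟨v.parent, ?_⟩
    cases v <;> simp_all [adj_iff, parent, depth]
  isAcyclic := isAcyclic_of_adj_le_unique (f := depth) fun _ _ _ h h' hle hle' =>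
    (eq_parent_of_adj h hle).trans (eq_parent_of_adj h' hle').symm

lemma neighborSet_root : (hubTree L).neighborSet root = Set.range hub := by
  ext v
  cases v <;> simp [adj_iff, parent]

lemma neighborSet_hub (i : ι) :
    (hubTree L).neighborSet (hub i) = insert root (Set.range (leaf i)) := by
  refine Set.Subset.antisymm (fun v h => ?_) <| Set.insert_subset (adj_root_hub i).symm <|
    Set.range_subset_iff.2 (adj_hub_leaf i)
  cases v with
  | root => exact Set.mem_insert _ _
  | hub j => simp [adj_iff, parent] at h
  | leaf j l =>
    obtain rfl : j = i := by simpa [adj_iff, parent] using h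
    exact Set.mem_insert_of_mem _ ⟨l, rfl⟩

lemma neighborSet_leaf (i : ι) (l : L i) : (hubTree L).neighborSet (leaf i l) = {hub i} := by
  ext v
  cases v <;> simp [adj_iff, parent, eq_comm]

lemma ncard_neighborSet_hub (i : ι) [Finite (L i)] :
    ((hubTree L).neighborSet (hub i)).ncard = Nat.card (L i) + 1 := by
  rw [neighborSet_hub, Set.ncard_insert_of_notMem (by simp),
    Set.ncard_range_of_injective (leaf_injective i)]

lemma exists_card_leaves_eq_of_iso {κ : Type*} {M : κ → Type*} [Finite κ] [∀ j, Finite (M j)]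
    (e : hubTree L ≃g hubTree M) (i : ι) [Finite (L i)] (h : Nat.card κ ≤ Nat.card (L i)) :
    ∃ j, Nat.card (M j) = Nat.card (L i) := by
  have hcard : ((hubTree M).neighborSet (e (hub i))).ncard = Nat.card (L i) + 1 :=
    (Nat.card_congr (e.mapNeighborSet (hub i))).symm.trans (ncard_neighborSet_hub i)
  cases he : e (hub i) with
  | root =>
    rw [he, neighborSet_root, Set.ncard_range_of_injective hub_injective] at hcard
    omega
  | hub j =>
    rw [he, ncard_neighborSet_hub] at hcard
    exact ⟨j, by omega⟩
  | leaf j l =>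
    rw [he, neighborSet_leaf, Set.ncard_singleton] at hcard
    have : Nonempty κ := ⟨j⟩
    have := Nat.card_pos (α := κ)
    omega

lemma isVertexCover_range_hub : (hubTree L).IsVertexCover (Set.range hub) := by
  intro v w h
  cases v <;> cases w <;> simp_all [adj_iff, parent]

lemma eq_root_of_adj {a b c d : HubVertex L} (hab : (hubTree L).Adj a b)
    (hbc : (hubTree L).Adj b c) (hcd : (hubTree L).Adj c d) (hac : a ≠ c) (hbd : b ≠ d) :
    b = root ∨ c = root := by
  cases b <;> cases c <;> cases a <;> cases d <;> simp_all [adj_iff, parent]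

section Path

variable {u w : HubVertex L} {p : (hubTree L).Walk u w}

lemma getVert_eq_root (hp : p.IsPath) {m : ℕ} (hm : m + 3 ≤ p.length) :
    p.getVert (m + 1) = root ∨ p.getVert (m + 2) = root := by
  have hne {s t : ℕ} (hs : s ≤ p.length) (ht : t ≤ p.length) (hst : s ≠ t) :
      p.getVert s ≠ p.getVert t := hp.getVert_injOn.ne hs ht hst
  exact eq_root_of_adj (p.adj_getVert_succ (i := m) (by omega))
    (p.adj_getVert_succ (by omega)) (p.adj_getVert_succ (by omega))
    (hne (by omega) (by omega) (by omega)) (hne (by omega) (by omega) (by omega))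

lemma root_mem_support (hp : p.IsPath) (hlen : 3 ≤ p.length) : root ∈ p.support := by
  obtain h | h := getVert_eq_root hp (m := 0) hlen <;> exact h ▸ p.getVert_mem_support _

/- The root would be the second or third vertex of a longer path, and also its fourth or fifth. -/
lemma length_le_four (hp : p.IsPath) : p.length ≤ 4 := by
  by_contra! hlen
  have hinj {s t : ℕ} (hs : s ≤ 4) (ht : t ≤ 4) (h : p.getVert s = root)
      (h' : p.getVert t = root) : s = t :=
    hp.getVert_injOn (hs.trans hlen.le) (ht.trans hlen.le) (h.trans h'.symm)
  obtain h | h := getVert_eq_root hp (m := 0) (by omega) <;>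
    obtain h' | h' := getVert_eq_root hp (m := 2) (by omega) <;>
    have := hinj (by omega) (by omega) h h' <;> omega

end Path

variable [Fintype ι] [∀ i, Fintype (L i)] {k : ℕ}

lemma pathNum_le_card_hubs (hk : 2 ≤ k) : (hubTree L).pathNum k ≤ Fintype.card ι := by
  let hubs : Finset (HubVertex L) := Finset.univ.map ⟨hub, hub_injective⟩
  have hcover : (hubTree L).IsPathVertexCover 2 hubs := by
    simpa [hubs] using isPathVertexCover_two.2 (isVertexCover_range_hub (L := L))
  simpa [hubs] using pathNum_le_card (isPathVertexCover_mono two_ne_zero hk hcover)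

lemma card_hubs_le_pathNum_three [∀ i, Nonempty (L i)] {i₀ : ι} (h : ∀ i ≠ i₀, Nontrivial (L i)) :
    Fintype.card ι ≤ (hubTree L).pathNum 3 := by
  refine card_le_pathNum_of_fiber_paths (hubIndex i₀) fun i => ?_
  obtain ⟨l⟩ := ‹∀ i, Nonempty (L i)› i
  have hl := adj_hub_leaf i l
  by_cases hi : i = i₀
  · exact ⟨_, _, .cons (adj_root_hub i) (.cons hl .nil), by simp [hubIndex, hi]⟩
  · have := h i hi
    obtain ⟨l', hll'⟩ := exists_ne l
    exact ⟨_, _, .cons (adj_hub_leaf i l').symm (.cons hl .nil), by simp [hubIndex, hll']⟩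

lemma pathNum_eq_card_hubs [∀ i, Nonempty (L i)] {i₀ : ι} (h : ∀ i ≠ i₀, Nontrivial (L i))
    (hk : 2 ≤ k) (hk' : k ≤ 3) : (hubTree L).pathNum k = Fintype.card ι :=
  (pathNum_le_card_hubs hk).antisymm <|
    (card_hubs_le_pathNum_three h).trans (pathNum_antitone (by omega) hk')

lemma pathNum_le_one (hk : 4 ≤ k) : (hubTree L).pathNum k ≤ 1 := by
  refine pathNum_le_card (S := {root}) fun u w p hp hlen => ⟨root, ?_, by simp⟩
  rw [Walk.length_support] at hlen
  exact root_mem_support hp (by omega)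

lemma pathNum_five_pos [Nontrivial ι] [∀ i, Nonempty (L i)] : 0 < (hubTree L).pathNum 5 := by
  obtain ⟨i, j, hij⟩ := exists_pair_ne ι
  obtain ⟨l⟩ := ‹∀ i, Nonempty (L i)› i
  obtain ⟨l'⟩ := ‹∀ i, Nonempty (L i)› j
  let p : (hubTree L).Walk (leaf i l) (leaf j l') :=
    .cons (adj_hub_leaf i l).symm <| .cons (adj_root_hub i).symm <|
      .cons (adj_root_hub j) <| .cons (adj_hub_leaf j l') .nil
  have hp : p.IsPath := by simp [p, hij]
  exact pathNum_pos hp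

lemma pathNum_eq_one [Nontrivial ι] [∀ i, Nonempty (L i)] (hk : 4 ≤ k) (hk' : k ≤ 5) :
    (hubTree L).pathNum k = 1 :=
  (pathNum_le_one hk).antisymm <|
    Nat.succ_le_of_lt <| pathNum_five_pos.trans_le (pathNum_antitone (by omega) hk')

lemma pathNum_eq_zero (hk : 6 ≤ k) : (hubTree L).pathNum k = 0 := by
  refine Nat.le_zero.1 (pathNum_le_card (S := ∅) fun u w p hp hlen => ?_)
  rw [Walk.length_support] at hlen
  have := length_le_four hp
  omega

lemma pathNum_eq_pathNum {κ : Type*} {M : κ → Type*} [Fintype κ] [∀ j, Fintype (M j)]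
    [Nontrivial ι] [Nontrivial κ] [∀ i, Nonempty (L i)] [∀ j, Nonempty (M j)]
    {i₀ : ι} (hL : ∀ i ≠ i₀, Nontrivial (L i)) {j₀ : κ} (hM : ∀ j ≠ j₀, Nontrivial (M j))
    (hhubs : Fintype.card ι = Fintype.card κ)
    (hverts : Fintype.card (HubVertex L) = Fintype.card (HubVertex M)) (hk : 1 ≤ k) :
    (hubTree L).pathNum k = (hubTree M).pathNum k := by
  obtain rfl | ⟨h, h'⟩ | ⟨h, h'⟩ | h :
      k = 1 ∨ (2 ≤ k ∧ k ≤ 3) ∨ (4 ≤ k ∧ k ≤ 5) ∨ 6 ≤ k := by omega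
  · rw [pathNum_one, pathNum_one, hverts]
  · rw [pathNum_eq_card_hubs hL h h', pathNum_eq_card_hubs hM h h', hhubs]
  · rw [pathNum_eq_one h h', pathNum_eq_one h h']
  · rw [pathNum_eq_zero h, pathNum_eq_zero h]

end hubTree

/-- The double broom obtained from a path on three vertices, the middle one being the root, by
attaching `a` leaves to one end and `b` leaves to the other. -/
abbrev doubleBroom (a b : ℕ) : SimpleGraph (HubVertex fun i => Fin (![a, b] i)) :=
  hubTree _

namespace doubleBroom

variable {a b a' b' : ℕ}

lemma card_vertices (a b : ℕ) :
    Fintype.card (HubVertex fun i => Fin (![a, b] i)) = a + b + 3 := by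
  simp only [HubVertex.card_eq, Fin.sum_univ_two, Fintype.card_fin, Matrix.cons_val_zero,
    Matrix.cons_val_one]
  omega

lemma nonempty_leaves (ha : 1 ≤ a) (hb : 1 ≤ b) (i : Fin 2) : Nonempty (Fin (![a, b] i)) := by
  fin_cases i
  exacts [⟨⟨0, ha⟩⟩, ⟨⟨0, hb⟩⟩]

lemma nontrivial_leaves (hb : 2 ≤ b) (i : Fin 2) (hi : i ≠ 0) : Nontrivial (Fin (![a, b] i)) := by
  obtain rfl : i = 1 := by omega
  exact Fin.nontrivial_iff_two_le.2 hb

lemma pathNum_eq_pathNum (ha : 1 ≤ a) (hb : 2 ≤ b) (ha' : 1 ≤ a') (hb' : 2 ≤ b')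
    (hab : a + b = a' + b') {k : ℕ} (hk : 1 ≤ k) :
    (doubleBroom a b).pathNum k = (doubleBroom a' b').pathNum k := by
  have := nonempty_leaves ha (one_le_two.trans hb)
  have := nonempty_leaves ha' (one_le_two.trans hb')
  exact hubTree.pathNum_eq_pathNum (nontrivial_leaves hb) (nontrivial_leaves hb') rfl
    (by rw [card_vertices, card_vertices, hab]) hk

lemma isEmpty_iso (hb : 2 ≤ b) (hba' : b ≠ a') (hbb' : b ≠ b') :
    IsEmpty (doubleBroom a b ≃g doubleBroom a' b') := by
  refine ⟨fun e => ?_⟩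
  obtain ⟨j, hj⟩ := hubTree.exists_card_leaves_eq_of_iso e 1 (by simpa using hb)
  fin_cases j
  · exact hba' (by simpa using hj.symm)
  · exact hbb' (by simpa using hj.symm)

end doubleBroom

theorem exists_nonisomorphic_trees_same_path_sequence (n : ℕ) (hn : 7 ≤ n) :
    ∃ T₁ T₂ : SimpleGraph (Fin n), T₁.IsTree ∧ T₂.IsTree ∧
      ¬ Nonempty (T₁ ≃g T₂) ∧
      ∀ k : ℕ, 1 ≤ k → k ≤ n → T₁.pathNum k = T₂.pathNum k := by
  let e₁ := (doubleBroom 1 (n - 4)).overFinIso (n := n)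
    (by rw [doubleBroom.card_vertices]; omega)
  let e₂ := (doubleBroom 2 (n - 5)).overFinIso (n := n)
    (by rw [doubleBroom.card_vertices]; omega)
  have hiso : IsEmpty (doubleBroom 1 (n - 4) ≃g doubleBroom 2 (n - 5)) :=
    doubleBroom.isEmpty_iso (by omega) (by omega) (by omega)
  refine ⟨_, _, e₁.isTree_iff.1 (hubTree.isTree _), e₂.isTree_iff.1 (hubTree.isTree _),
    fun ⟨f⟩ => hiso.false (e₁.trans (f.trans e₂.symm)), fun k hk _ => ?_⟩
  rw [← pathNum_congr e₁, ← pathNum_congr e₂]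
  exact doubleBroom.pathNum_eq_pathNum le_rfl (by omega) one_le_two (by omega) (by omega) hk
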